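/- Let (X, μ) be a standard Borel space with a non-atomic Borel probability measure μ. For every m, n ∈ ℕ and every pair of finite sequences of indices 1 ≤ k₁, …, k_p ≤ m and 1 ≤ l₁, …, l_q ≤ n, the set of tuples (f₁,…,f_m,g₁,…,g_n) ∈ L⁰(μ,𝕋)^{m+n} such that all of f₁,…,f_m,g₁,…,g_n are finite step functions (i.e., measurable functions with finite range) and f_{k₁}⋯f_{k_p} ∩ g_{l₁}⋯g_{l_q} ≈ ∅, is dense in L⁰(μ,𝕋)^{m+n}. -/

import Mathlib

open MeasureTheory Set

/-- The Borel σ-algebra on the circle group `𝕋 ⊆ ℂ`. -/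
noncomputable instance : MeasurableSpace Circle := borel Circle
instance : BorelSpace Circle := ⟨rfl⟩

/-- The metric `d(f,g) = ∫ |f − g| dμ` inducing the topology of convergence in measure
on `L⁰(μ, 𝕋)`. -/
noncomputable def L0dist {Y : Type*} [MeasurableSpace Y] (ν : Measure Y)
    (f g : Y →ₘ[ν] Circle) : ℝ :=
  ∫ x, ‖(f x : ℂ) - (g x : ℂ)‖ ∂ν

/-- The topology of convergence in measure on `L⁰(μ, 𝕋)`: the topology induced by the metric
`L0dist`, i.e. generated by the open balls of that metric. -/
noncomputable instance L0top {Y : Type*} [MeasurableSpace Y] (ν : Measure Y) :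
    TopologicalSpace (Y →ₘ[ν] Circle) :=
  TopologicalSpace.generateFrom
    {U | ∃ (f : Y →ₘ[ν] Circle) (ε : ℝ), 0 < ε ∧ U = {g | L0dist ν f g < ε}}

/-- The set of products `f₁(B)⋯f_m(B) = {f₁(x₁)⋯f_m(x_m) : x₁,…,x_m ∈ B}`. -/
def prodSet {X : Type*} {G : Type*} [Monoid G] {m : ℕ} (f : Fin m → X → G) (B : Set X) :
    Set G :=
  {g | ∃ x : Fin m → X, (∀ i, x i ∈ B) ∧ g = (List.ofFn fun i => f i (x i)).prod}

/-- `ρ_{m,n}(f₁,…,f_m,g₁,…,g_n)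
  = inf { μ(A) : A Borel, f₁(X∖A)⋯f_m(X∖A) ∩ g₁(X∖A)⋯g_n(X∖A) = ∅ }`. -/
noncomputable def rho {X : Type*} [MeasurableSpace X] {G : Type*} [Monoid G] {m n : ℕ}
    (μ : Measure X) (f : Fin m → X → G) (g : Fin n → X → G) : ℝ :=
  sInf {c : ℝ | ∃ A : Set X, MeasurableSet A ∧
    Disjoint (prodSet f Aᶜ) (prodSet g Aᶜ) ∧ c = (μ A).toReal}

/-- An element of `L⁰(μ,𝕋)` is a finite step function if it has a Borel measurable
representative with finite range. -/
def IsFiniteStep {X : Type*} [MeasurableSpace X] {μ : Measure X} (f : X →ₘ[μ] Circle) : Prop :=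
  ∃ s : X → Circle, Measurable s ∧ (Set.range s).Finite ∧ ⇑f =ᵐ[μ] s

/-!
Let `E_N(a)` be the coset `{z | z ^ N = a}` of the `N`-th roots of unity. Rounding every function
to such a coset moves it by at most `2π / N` and leaves it with finitely many values. If the `fᵢ`
are rounded to `E_N(a)` and the `gⱼ` to `E_N(b)`, then every product of `p` values of the former has
`N`-th power `a ^ p`, and every product of `q` values of the latter has `N`-th power `b ^ q`. Hence
the two product sets are disjoint as soon as `a ^ p ≠ b ^ q`, and such `a` and `b` can be chosen
once and for all, independently of `N`.
-/

open Filter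
open scoped Real Topology

section Circle

lemma circle_dist_eq_norm (z w : Circle) : dist z w = ‖(z : ℂ) - w‖ :=
  dist_eq_norm (z : ℂ) w

lemma dist_circleExp_le (a b : ℝ) : dist (Circle.exp a) (Circle.exp b) ≤ |a - b| := by
  have factor : (Circle.exp a : ℂ) - Circle.exp b
      = Circle.exp b * (Complex.exp (Complex.I * ((a - b : ℝ) : ℂ)) - 1) := by
    rw [Circle.coe_exp, Circle.coe_exp, mul_sub, ← Complex.exp_add]
    push_cast
    ring_nf
  rw [circle_dist_eq_norm, factor, norm_mul, Circle.norm_coe, one_mul]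
  exact Real.norm_exp_I_mul_ofReal_sub_one_le

lemma finite_setOf_circle_pow_eq {N : ℕ} (hN : 0 < N) (a : Circle) :
    {z : Circle | z ^ N = a}.Finite := by
  have finite_roots : {z : ℂ | z ^ N = a}.Finite := by
    rw [← Polynomial.nthRootsFinset_toSet hN]
    exact Finset.finite_toSet _
  exact (finite_roots.preimage Circle.coe_injective.injOn).subset fun z hz =>
    congrArg ((↑) : Circle → ℂ) hz

/-- Rounding of the circle to the coset `{z | z ^ N = exp (2πs)}` of the `N`-th roots of unity,
used to approximate measurable functions by step functions. For `0 ≤ s ≤ 1` the rounded point lies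
on the same arc between consecutive `N`-th roots of unity as the original one. -/
noncomputable def roundToCoset (N : ℕ) (s : ℝ) (z : Circle) : Circle :=
  Circle.exp (2 * π / N * (⌊N / (2 * π) * Complex.arg z⌋ + s))

lemma measurable_roundToCoset (N : ℕ) (s : ℝ) : Measurable (roundToCoset N s) := by
  have measurable_coe : Measurable fun z : Circle => (z : ℂ) := Continuous.measurable (by fun_prop)
  unfold roundToCoset
  fun_prop

lemma roundToCoset_pow {N : ℕ} (hN : 0 < N) (s : ℝ) (z : Circle) :
    roundToCoset N s z ^ N = Circle.exp (2 * π * s) := by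
  rw [roundToCoset, ← Circle.exp_natCast_mul, ← mul_assoc, mul_div_cancel₀ _ (by positivity),
    mul_add, Circle.exp_add, Circle.exp_two_pi_mul_int, one_mul]

lemma finite_range_roundToCoset {N : ℕ} (hN : 0 < N) (s : ℝ) :
    (range (roundToCoset N s)).Finite :=
  (finite_setOf_circle_pow_eq hN _).subset <| range_subset_iff.2 <| roundToCoset_pow hN s

lemma dist_roundToCoset_le {N : ℕ} (hN : 0 < N) {s : ℝ} (hs : s ∈ Icc 0 1) (z : Circle) :
    dist z (roundToCoset N s z) ≤ 2 * π / N := by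
  set t : ℝ := N / (2 * π) * Complex.arg z with ht
  have arg_eq : Complex.arg z = 2 * π / N * t := by rw [ht]; field_simp
  have floor_close : |t - (⌊t⌋ + s)| ≤ 1 := by
    rw [abs_le]
    constructor <;> linarith [Int.floor_le t, Int.lt_floor_add_one t, hs.1, hs.2]
  calc dist z (roundToCoset N s z)
      = dist (Circle.exp (2 * π / N * t)) (Circle.exp (2 * π / N * (⌊t⌋ + s))) := by
        rw [← arg_eq, Circle.exp_arg, roundToCoset]
    _ ≤ |2 * π / N * t - 2 * π / N * (⌊t⌋ + s)| := dist_circleExp_le _ _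
    _ = 2 * π / N * |t - (⌊t⌋ + s)| := by rw [← mul_sub, abs_mul, abs_of_nonneg (by positivity)]
    _ ≤ 2 * π / N := mul_le_of_le_one_right (by positivity) floor_close

lemma exists_circleExp_pow_ne {p q : ℕ} (hpq : 0 < p + q) :
    ∃ s ∈ Icc (0 : ℝ) 1, ∃ t ∈ Icc (0 : ℝ) 1,
      Circle.exp (2 * π * s) ^ p ≠ Circle.exp (2 * π * t) ^ q := by
  have one_le : (1 : ℝ) ≤ p + q := by exact_mod_cast hpq
  -- With `t = 1 - s` equal powers force `exp (2πs(p + q)) = 1`; this `s` makes it `exp π = -1`.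
  set s : ℝ := 1 / (2 * (p + q)) with hs
  have hs₀ : 0 ≤ s := by positivity
  have hs₁ : s ≤ 1 := by rw [hs, div_le_one (by positivity)]; linarith
  refine ⟨s, ⟨hs₀, hs₁⟩, 1 - s, ⟨by linarith, by linarith⟩, fun h => Circle.exp_pi_ne_one ?_⟩
  have exp_one_sub : Circle.exp (2 * π * (1 - s)) = (Circle.exp (2 * π * s))⁻¹ := by
    rw [mul_one_sub, Circle.exp_sub, Circle.exp_two_pi, one_div]
  calc Circle.exp π = Circle.exp ((p + q : ℕ) * (2 * π * s)) := by
        rw [hs]; push_cast; field_simp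
    _ = 1 := by
        rw [Circle.exp_natCast_mul, pow_add, h, exp_one_sub, inv_pow, inv_mul_cancel]

end Circle

section MeasurableFunctions

variable {X : Type*} [MeasurableSpace X] {μ : Measure X}

/-- The approximation of an element of `L⁰(μ, 𝕋)` by the finite step function obtained by rounding
its values to the coset `{z | z ^ N = exp (2πs)}`. -/
noncomputable def stepApprox (N : ℕ) (s : ℝ) (f : X →ₘ[μ] Circle) : X →ₘ[μ] Circle :=
  f.compMeasurable (roundToCoset N s) (measurable_roundToCoset N s)

lemma coeFn_stepApprox (N : ℕ) (s : ℝ) (f : X →ₘ[μ] Circle) :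
    stepApprox N s f =ᵐ[μ] roundToCoset N s ∘ f :=
  f.coeFn_compMeasurable _ _

lemma isFiniteStep_stepApprox {N : ℕ} (hN : 0 < N) (s : ℝ) (f : X →ₘ[μ] Circle) :
    IsFiniteStep (stepApprox N s f) :=
  ⟨_, (measurable_roundToCoset N s).comp f.measurable,
    (finite_range_roundToCoset hN s).subset (range_comp_subset_range _ _), coeFn_stepApprox N s f⟩

lemma stepApprox_ae_pow_eq {N : ℕ} (hN : 0 < N) (s : ℝ) (f : X →ₘ[μ] Circle) :
    ∀ᵐ x ∂μ, stepApprox N s f x ^ N = Circle.exp (2 * π * s) := by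
  filter_upwards [coeFn_stepApprox N s f] with x hx
  rw [hx, Function.comp_apply, roundToCoset_pow hN]

lemma L0dist_eq_integral_dist (f g : X →ₘ[μ] Circle) :
    L0dist μ f g = ∫ x, dist (f x) (g x) ∂μ := by
  simp only [L0dist, circle_dist_eq_norm]

variable [IsFiniteMeasure μ]

lemma integrable_dist_circle (f g : X →ₘ[μ] Circle) :
    Integrable (fun x => dist (f x) (g x)) μ := by
  refine .of_bound (f.aestronglyMeasurable.dist g.aestronglyMeasurable)
    (Metric.diam (univ : Set Circle)) (.of_forall fun x => ?_)
  rw [Real.norm_of_nonneg dist_nonneg]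
  exact Metric.dist_le_diam_of_mem isCompact_univ.isBounded (mem_univ _) (mem_univ _)

lemma L0dist_triangle (f g h : X →ₘ[μ] Circle) :
    L0dist μ f h ≤ L0dist μ f g + L0dist μ g h := by
  simp only [L0dist_eq_integral_dist]
  rw [← integral_add (integrable_dist_circle f g) (integrable_dist_circle g h)]
  exact integral_mono (integrable_dist_circle f h)
    ((integrable_dist_circle f g).add (integrable_dist_circle g h)) fun x => dist_triangle _ _ _

lemma L0dist_le_of_ae_dist_le {f g : X →ₘ[μ] Circle} {C : ℝ}
    (h : ∀ᵐ x ∂μ, dist (f x) (g x) ≤ C) : L0dist μ f g ≤ C * μ.real univ :=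
  (Real.le_norm_self _).trans <| norm_integral_le_of_norm_le_const <|
    h.mono fun x hx => by simpa [circle_dist_eq_norm] using hx

lemma tendsto_nhds_of_tendsto_L0dist {ι : Type*} {u : Filter ι} {F : ι → X →ₘ[μ] Circle}
    {f : X →ₘ[μ] Circle} (h : Tendsto (fun i => L0dist μ f (F i)) u (𝓝 0)) :
    Tendsto F u (𝓝 f) := by
  rw [TopologicalSpace.tendsto_nhds_generateFrom_iff]
  rintro _ ⟨g, ε, -, rfl⟩ (hf : L0dist μ g f < ε)
  filter_upwards [h.eventually_lt_const (sub_pos.2 hf)] with i hi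
  exact (L0dist_triangle g f (F i)).trans_lt (by linarith)

lemma tendsto_stepApprox {s : ℝ} (hs : s ∈ Icc 0 1) (f : X →ₘ[μ] Circle) :
    Tendsto (fun N => stepApprox N s f) atTop (𝓝 f) := by
  have bound_tendsto : Tendsto (fun N : ℕ => 2 * π / N * μ.real univ) atTop (𝓝 0) := by
    simpa using (tendsto_const_div_atTop_nhds_zero_nat (2 * π)).mul_const (μ.real univ)
  refine tendsto_nhds_of_tendsto_L0dist <| squeeze_zero'
    (.of_forall fun N => integral_nonneg fun x => norm_nonneg _) ?_ bound_tendsto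
  filter_upwards [eventually_gt_atTop 0] with N hN
  refine L0dist_le_of_ae_dist_le ?_
  filter_upwards [coeFn_stepApprox N s f] with x hx
  rw [hx]
  exact dist_roundToCoset_le hN hs (f x)

end MeasurableFunctions

section ProductSets

variable {X G : Type*}

lemma prodSet_fin_zero [Monoid G] (f : Fin 0 → X → G) (B : Set X) : prodSet f B = {1} := by
  ext z
  simp [prodSet]

lemma pow_eq_of_mem_prodSet [CommMonoid G] {N p : ℕ} {f : Fin p → X → G} {B : Set X} {a z : G}
    (hf : ∀ i, ∀ x ∈ B, f i x ^ N = a) (hz : z ∈ prodSet f B) : z ^ N = a ^ p := by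
  obtain ⟨x, hx, rfl⟩ := hz
  simp [List.prod_ofFn, ← Finset.prod_pow, hf _ _ (hx _)]

variable [MeasurableSpace X] {μ : Measure X}

-- No set `A` separates the two products `{1}`, so this is the junk value `sInf ∅ = 0`.
lemma rho_fin_zero [Monoid G] (f g : Fin 0 → X → G) : rho μ f g = 0 := by
  simp [rho, prodSet_fin_zero]

lemma rho_eq_zero_of_disjoint_compl [Monoid G] {p q : ℕ} {f : Fin p → X → G} {g : Fin q → X → G}
    {A : Set X} (hA : MeasurableSet A) (hμA : μ A = 0)
    (hdisj : Disjoint (prodSet f Aᶜ) (prodSet g Aᶜ)) : rho μ f g = 0 := by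
  refine IsLeast.csInf_eq ⟨⟨A, hA, hdisj, by simp [hμA]⟩, ?_⟩
  rintro _ ⟨_, _, _, rfl⟩
  exact ENNReal.toReal_nonneg

lemma rho_eq_zero_of_ae_pow_eq [CommMonoid G] {N p q : ℕ} {f : Fin p → X → G}
    {g : Fin q → X → G} {a b : G} (hf : ∀ i, ∀ᵐ x ∂μ, f i x ^ N = a)
    (hg : ∀ j, ∀ᵐ x ∂μ, g j x ^ N = b) (hab : a ^ p ≠ b ^ q) : rho μ f g = 0 := by
  obtain ⟨A, hsub, hA, hμA⟩ := exists_measurable_superset_of_null <|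
    ae_iff.1 ((ae_all_iff.2 hf).and (ae_all_iff.2 hg))
  have pow_eq (x : X) (hx : x ∈ Aᶜ) : (∀ i, f i x ^ N = a) ∧ ∀ j, g j x ^ N = b :=
    not_not.1 fun h => hx (hsub h)
  refine rho_eq_zero_of_disjoint_compl hA hμA <| disjoint_left.2 fun z hzf hzg => hab ?_
  rw [← pow_eq_of_mem_prodSet (fun i x hx => (pow_eq x hx).1 i) hzf,
    pow_eq_of_mem_prodSet (fun j x hx => (pow_eq x hx).2 j) hzg]

end ProductSets

lemma exists_rho_stepApprox_eq_zero {X : Type*} [MeasurableSpace X] (μ : Measure X) (p q : ℕ) :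
    ∃ s ∈ Icc (0 : ℝ) 1, ∃ t ∈ Icc (0 : ℝ) 1, ∀ N : ℕ, 0 < N →
      ∀ (f : Fin p → X →ₘ[μ] Circle) (g : Fin q → X →ₘ[μ] Circle),
        rho μ (fun i => stepApprox N s (f i)) (fun j => stepApprox N t (g j)) = 0 := by
  rcases Nat.eq_zero_or_pos (p + q) with hpq | hpq
  · obtain ⟨rfl, rfl⟩ := Nat.add_eq_zero_iff.1 hpq
    exact ⟨0, by simp, 0, by simp, fun _ _ _ _ => rho_fin_zero _ _⟩
  · obtain ⟨s, hs, t, ht, hne⟩ := exists_circleExp_pow_ne hpq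
    exact ⟨s, hs, t, ht, fun N hN f g => rho_eq_zero_of_ae_pow_eq
      (fun i => stepApprox_ae_pow_eq hN s (f i)) (fun j => stepApprox_ae_pow_eq hN t (g j)) hne⟩

theorem statement2_general {X : Type*} [MeasurableSpace X] (μ : Measure X) [IsFiniteMeasure μ]
    (m n p q : ℕ) (k : Fin p → Fin m) (l : Fin q → Fin n) :
    Dense {fg : (Fin m → (X →ₘ[μ] Circle)) × (Fin n → (X →ₘ[μ] Circle)) |
        (∀ i, IsFiniteStep (fg.1 i)) ∧ (∀ j, IsFiniteStep (fg.2 j)) ∧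
        rho μ (fun i => ⇑(fg.1 (k i))) (fun j => ⇑(fg.2 (l j))) = 0} := by
  rintro ⟨f, g⟩
  obtain ⟨s, hs, t, ht, hrho⟩ := exists_rho_stepApprox_eq_zero μ p q
  have approx_tendsto : Tendsto (fun N : ℕ => (fun i => stepApprox N s (f i),
      fun j => stepApprox N t (g j))) atTop (𝓝 (f, g)) :=
    (tendsto_pi_nhds.2 fun i => tendsto_stepApprox hs (f i)).prodMk_nhds
      (tendsto_pi_nhds.2 fun j => tendsto_stepApprox ht (g j))
  refine mem_closure_of_tendsto approx_tendsto ?_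
  filter_upwards [eventually_gt_atTop 0] with N hN
  exact ⟨fun i => isFiniteStep_stepApprox hN s (f i), fun j => isFiniteStep_stepApprox hN t (g j),
    hrho N hN (f ∘ k) (g ∘ l)⟩

/-- For `(X,μ)` a standard Borel space with a non-atomic Borel probability measure, every
`m, n ∈ ℕ` and all indices `1 ≤ k₁,…,k_p ≤ m`, `1 ≤ l₁,…,l_q ≤ n`, the set of tuples
`(f₁,…,f_m,g₁,…,g_n) ∈ L⁰(μ,𝕋)^{m+n}` with all entries finite step functions and
`f_{k₁}⋯f_{k_p} ∩ g_{l₁}⋯g_{l_q} ≈ ∅` is dense in `L⁰(μ,𝕋)^{m+n}`. -/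
theorem statement2 {X : Type*} [MeasurableSpace X] [StandardBorelSpace X]
    (μ : Measure X) [IsProbabilityMeasure μ] [NullSingletonClass μ]
    (m n p q : ℕ) (k : Fin p → Fin m) (l : Fin q → Fin n) :
    Dense {fg : (Fin m → (X →ₘ[μ] Circle)) × (Fin n → (X →ₘ[μ] Circle)) |
        (∀ i, IsFiniteStep (fg.1 i)) ∧ (∀ j, IsFiniteStep (fg.2 j)) ∧
        rho μ (fun i => ⇑(fg.1 (k i))) (fun j => ⇑(fg.2 (l j))) = 0} :=
  statement2_general μ m n p q k l
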